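/- A \emph{plane st-digraph} is a finite acyclic digraph (parallel edges allowed) with at least one edge, with a single source and a single sink, embedded in the plane so that the source and the sink lie on the boundary of the outer face. Let $D$ be a plane st-digraph and let $v_K$ be a vertex of $D$. Expand $v_K$ into a quadrilateral inner face $f_K$ whose vertices $a,b,c,d$ appear in this clockwise order on its boundary: $v_K$ is replaced by the $4$-cycle $a,b,c,d$, and the edges incident to $v_K$, taken in their clockwise circular order around $v_K$ and cut into four consecutive (possibly empty) blocks, are reattached block by block to $a,b,c,d$, outside $f_K$ and in the same circular order; the rest of the embedding is unchanged. Suppose that, if $v_K$ is neither the source nor the sink of $D$, each of $a,b,c,d$ receives at least one edge. Then the four boundary edges of $f_K$ can be directed so that in the resulting digraph $D'$: (I1) there is a single source and a single sink; (I2) the face $f_K$ is bounded by two directed paths of length two from a common origin to a common destination, the origin and the destination being two opposite (non-adjacent) vertices of $f_K$; and $D'$ is a planarly embedded acyclic digraph with a single source and a single sink. Moreover, the directions can be chosen so that, in addition, $D'$ is again a plane st-digraph (its source and its sink lie on the boundary of the outer face) whenever each of $a,b,c,d$ receives at least one edge (in particular whenever $v_K$ is neither the source nor the sink of $D$), and also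 whenever some vertex of $f_K$ that lies on the boundary of the outer face is opposite in $f_K$ to a vertex that receives at least one edge. -/

import Mathlib

/-! Digraphs (parallel edges allowed) embedded in the plane, given combinatorially: by the clockwise
rotation of the edge-ends around every vertex, together with a choice of the outer face. -/

/-- The vertex at an edge-end: `(e, true)` is the tail end of the edge `e` (at its source, where `e`
is outgoing), and `(e, false)` is the head end of `e` (at its target, where `e` is incoming). -/
def endVertex {V E : Type*} (src tgt : E → V) (x : E × Bool) : V :=
  if x.2 then src x.1 else tgt x.1

/-- A digraph with vertex set `V` and edge set `E`, with an embedding given by a rotation system: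
`rot` sends an edge-end to the clockwise next edge-end at the same vertex, so that its cycles are
exactly the sets of edge-ends at a common vertex. The outer face is the face (a cycle of `faceNext`
below) that contains the edge-end `outer`. -/
structure EmbeddedDigraph (V E : Type*) where
  src : E → V
  tgt : E → V
  rot : Equiv.Perm (E × Bool)
  sameCycle_rot_iff : ∀ x y : E × Bool,
    rot.SameCycle x y ↔ endVertex src tgt x = endVertex src tgt y
  outer : E × Bool

namespace EmbeddedDigraph

variable {V E : Type*} (D : EmbeddedDigraph V E)

/-- The vertex at an edge-end. -/
def vert (x : E × Bool) : V := endVertex D.src D.tgt x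

/-- There is an edge from `u` to `w`. -/
def Adj (u w : V) : Prop := ∃ e : E, D.src e = u ∧ D.tgt e = w

def IsSource (u : V) : Prop := ∀ e : E, D.tgt e ≠ u

def IsSink (u : V) : Prop := ∀ e : E, D.src e ≠ u

/-- Acyclic, with a single source and a single sink. -/
def IsStGraph : Prop :=
  (∀ u : V, ¬ Relation.TransGen D.Adj u u) ∧ (∃! s : V, D.IsSource s) ∧ (∃! t : V, D.IsSink t)

/-- The other end of the same edge. -/
def flip : Equiv.Perm (E × Bool) := Equiv.prodCongr (Equiv.refl E) Equiv.boolNot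

/-- The boundary walk of a face, with the face on its left. The edge-end `x` stands for the edge of
`x` traversed starting from `x`; the walk goes to the other end of that edge, and then leaves along
the edge that comes clockwise next there. -/
def faceNext : Equiv.Perm (E × Bool) := flip.trans D.rot

/-- The faces are the cycles of `faceNext`. -/
def Face : Type _ := Quotient (Equiv.Perm.SameCycle.setoid D.faceNext)

/-- The embedding is an embedding in the plane (equivalently, in the sphere): the underlying
undirected graph is connected and Euler's formula `|V| - |E| + |F| = 2` holds. -/
def IsPlane : Prop :=
  (∀ u w : V, Relation.EqvGen D.Adj u w) ∧ Nat.card V + Nat.card D.Face = Nat.card E + 2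

/-- The vertex `u` lies on the boundary of the outer face. -/
def OnOuterFace (u : V) : Prop := ∃ x : E × Bool, D.faceNext.SameCycle D.outer x ∧ D.vert x = u

/-- A plane st-graph: a plane embedding of an st-graph with its source and its sink on the boundary
of the outer face. -/
def IsPlaneStGraph : Prop :=
  D.IsPlane ∧ D.IsStGraph ∧ ∀ u : V, D.IsSource u ∨ D.IsSink u → D.OnOuterFace u

/-- The list of edges `l` is a directed walk from `u` to `w`. -/
def IsDirectedWalk : V → List E → V → Prop
  | u, [], w => u = w
  | u, e :: l, w => D.src e = u ∧ IsDirectedWalk (D.tgt e) l w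

/-- There is a face whose boundary consists of the two directed paths `left` and `right` from the
origin `o` to the destination `t`: its boundary walk, with the face on the left, follows `right`
from `o` to `t` and then goes along `left` backwards from `t` to `o`. -/
def IsFaceBoundedBy (o t : V) (left right : List E) : Prop :=
  D.IsDirectedWalk o left t ∧ D.IsDirectedWalk o right t ∧
    (right.map (fun e => (e, true)) ++ left.reverse.map (fun e => (e, false))).Nodup ∧
    Cycle.Chain (fun x y => D.faceNext x = y)
      ((right.map (fun e => (e, true)) ++ left.reverse.map (fun e => (e, false)) :
        List (E × Bool)) : Cycle (E × Bool))

/-- A distribution of the edge-ends at the vertex `v` among four new vertices `0, 1, 2, 3`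
(that is, `a, b, c, d`) that respects the circular order around `v`: the edge-ends at `v`, listed
once each in clockwise order, are cut into four consecutive blocks (possibly empty). -/
structure Distribution (v : V) where
  block : Fin 4 → List (E × Bool)
  nodup : (block 0 ++ block 1 ++ block 2 ++ block 3).Nodup
  mem_iff : ∀ x : E × Bool, x ∈ block 0 ++ block 1 ++ block 2 ++ block 3 ↔ D.vert x = v
  clockwise : Cycle.Chain (fun x y => D.rot x = y)
    ((block 0 ++ block 1 ++ block 2 ++ block 3 : List (E × Bool)) : Cycle (E × Bool))

/-- An old edge-end, as an edge-end of the expanded digraph. -/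
def oldEnd (x : E × Bool) : (E ⊕ Fin 4) × Bool := (Sum.inl x.1, x.2)

/-- A permutation of the old edge-ends, extended by the identity. -/
def extendRot (σ : Equiv.Perm (E × Bool)) : Equiv.Perm ((E ⊕ Fin 4) × Bool) :=
  (Equiv.sumProdDistrib E (Fin 4) Bool).symm.permCongr (Equiv.sumCongr σ (Equiv.refl _))

/-- The permutation that acts as `π y` on the fibre of `p` over `y`. -/
def gluePerm {X Y : Type*} (p : X → Y) (π : Y → Equiv.Perm X)
    (h : ∀ x : X, p (π (p x) x) = p x) (h' : ∀ x : X, p ((π (p x)).symm x) = p x) :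
    Equiv.Perm X where
  toFun x := π (p x) x
  invFun x := (π (p x)).symm x
  left_inv x := by simp [h]
  right_inv x := by simp [h']

section Expansion

variable {D} {v : V} (S : D.Distribution v) (dir : Fin 4 → Bool)

open Classical in
/-- The new vertex to which an old edge-end at `v` is reattached. -/
noncomputable def Distribution.corner (x : E × Bool) : Fin 4 :=
  if x ∈ S.block 0 then 0 else if x ∈ S.block 1 then 1 else if x ∈ S.block 2 then 2 else 3

open Classical in
/-- The vertex at an edge-end of the expanded digraph. The vertex `v` is replaced by the four
vertices `Sum.inr i`. The new edge `Sum.inr i` joins the vertices `i` and `i + 1` (cyclically), and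
it is directed from `i` to `i + 1` if `dir i` is true and from `i + 1` to `i` otherwise. -/
noncomputable def Distribution.newVert :
    (E ⊕ Fin 4) × Bool → {u : V // u ≠ v} ⊕ Fin 4
  | (Sum.inl e, k) =>
      if h : D.vert (e, k) = v then Sum.inr (S.corner (e, k)) else Sum.inl ⟨D.vert (e, k), h⟩
  | (Sum.inr i, k) => Sum.inr (if k = dir i then i else i + 1)

/-- The edge-ends at the new vertex `i` in clockwise order: the edge to the vertex `i - 1`, the old
edge-ends reattached to `i`, and the edge to the vertex `i + 1`. -/
def Distribution.newList (i : Fin 4) : List ((E ⊕ Fin 4) × Bool) :=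
  (Sum.inr (i - 1), !dir (i - 1)) :: ((S.block i).map oldEnd ++ [(Sum.inr i, dir i)])

open Classical in
/-- The clockwise rotation around each vertex of the expanded digraph: the old one around the old
vertices other than `v`, and the cyclic order of `newList i` around the new vertex `i`. -/
noncomputable def Distribution.localRot :
    {u : V // u ≠ v} ⊕ Fin 4 → Equiv.Perm ((E ⊕ Fin 4) × Bool)
  | Sum.inl _ => extendRot D.rot
  | Sum.inr i => (S.newList dir i).formPerm

theorem Distribution.corner_eq_iff {x : E × Bool} (hx : D.vert x = v) (i : Fin 4) :
    S.corner x = i ↔ x ∈ S.block i := by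
  have hm := (S.mem_iff x).2 hx
  have hn := S.nodup
  simp only [List.nodup_append, List.mem_append] at hn hm
  unfold Distribution.corner
  fin_cases i <;> simp only [Fin.zero_eta, Fin.mk_one, Fin.reduceFinMk] <;> split_ifs <;>
    simp only [Fin.reduceEq, false_iff, true_iff] <;> grind

theorem Distribution.mem_newList_iff (x : (E ⊕ Fin 4) × Bool) (i : Fin 4) :
    x ∈ S.newList dir i ↔ S.newVert dir x = Sum.inr i := by
  obtain ⟨e | j, k⟩ := x
  · have hb : (Sum.inl e, k) ∈ S.newList dir i ↔ (e, k) ∈ S.block i := by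
      simp [Distribution.newList, oldEnd]
    rw [hb]
    by_cases h : D.vert (e, k) = v
    · simp [Distribution.newVert, h, S.corner_eq_iff h]
    · simp only [Distribution.newVert, h, dite_false, reduceCtorEq, iff_false]
      intro hm
      refine h ((S.mem_iff _).1 ?_)
      simp only [List.mem_append]
      fin_cases i <;> simp_all
  · simp only [Distribution.newList, oldEnd, Distribution.newVert, List.mem_cons, List.mem_append,
      List.mem_map, Prod.mk.injEq, reduceCtorEq, false_and, and_false, exists_false, false_or,
      List.not_mem_nil, or_false, Sum.inr.injEq]
    have h1 : j = i - 1 ↔ j + 1 = i := by rw [eq_sub_iff_add_eq]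
    have h2 : j + 1 ≠ j := by simp
    by_cases hj : j = i
    · subst hj
      have h3 : j ≠ j - 1 := fun h => h2 (h1.1 h)
      cases k <;> cases dir j <;> simp [h3]
    · by_cases hj' : j = i - 1
      · have h4 : i - 1 ≠ i := hj' ▸ hj
        subst hj'
        cases k <;> cases dir (i - 1) <;> simp [h4]
      · have h5 : j + 1 ≠ i := fun h => hj' (h1.2 h)
        simp only [hj, hj', false_and, or_self, false_iff]
        split_ifs <;> assumption

theorem Distribution.nodup_newList (i : Fin 4) : (S.newList dir i).Nodup := by
  have hn : (S.block i).Nodup := by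
    have := S.nodup
    simp only [List.nodup_append] at this
    fin_cases i <;> simp_all
  have ho : Function.Injective (oldEnd : E × Bool → _) := by
    rintro ⟨e, k⟩ ⟨e', k'⟩ h
    simpa [oldEnd] using h
  have hi : i - 1 ≠ i := by fin_cases i <;> simp
  simp [Distribution.newList, List.nodup_append, hn.map ho, oldEnd, hi]

theorem extendRot_inl (σ : Equiv.Perm (E × Bool)) (x : E × Bool) :
    extendRot σ (oldEnd x) = oldEnd (σ x) := rfl

theorem extendRot_symm_inl (σ : Equiv.Perm (E × Bool)) (x : E × Bool) :
    (extendRot σ).symm (oldEnd x) = oldEnd (σ.symm x) := rfl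

theorem vert_rot (x : E × Bool) : D.vert (D.rot x) = D.vert x :=
  ((D.sameCycle_rot_iff _ _).1 (Equiv.Perm.sameCycle_apply_left.2 (Equiv.Perm.SameCycle.refl _ _)))

theorem vert_rot_symm (x : E × Bool) : D.vert (D.rot.symm x) = D.vert x := by
  conv_rhs => rw [← D.rot.apply_symm_apply x, vert_rot]

theorem Distribution.newVert_oldEnd {x : E × Bool} (h : D.vert x ≠ v) :
    S.newVert dir (oldEnd x) = Sum.inl ⟨D.vert x, h⟩ := by
  simp [oldEnd, Distribution.newVert, h]

theorem Distribution.exists_of_newVert {x : (E ⊕ Fin 4) × Bool} {u : {u : V // u ≠ v}}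
    (h : S.newVert dir x = Sum.inl u) : ∃ y : E × Bool, x = oldEnd y ∧ D.vert y = u := by
  obtain ⟨e | j, k⟩ := x
  · refine ⟨(e, k), rfl, ?_⟩
    by_cases h' : D.vert (e, k) = v
    · simp [Distribution.newVert, h'] at h
    · simp only [Distribution.newVert, h', dite_false, Sum.inl.injEq] at h
      rw [← h]
  · simp [Distribution.newVert] at h

open Classical in
theorem Distribution.newVert_localRot (x : (E ⊕ Fin 4) × Bool) :
    S.newVert dir (S.localRot dir (S.newVert dir x) x) = S.newVert dir x := by
  rcases h : S.newVert dir x with u | i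
  · obtain ⟨y, rfl, hy⟩ := S.exists_of_newVert dir h
    have hv : D.vert (D.rot y) ≠ v := by rw [vert_rot, hy]; exact u.2
    simp only [Distribution.localRot, extendRot_inl, S.newVert_oldEnd dir hv, vert_rot, hy]
  · rw [← S.mem_newList_iff] at h ⊢
    exact List.formPerm_apply_mem_of_mem h

open Classical in
theorem Distribution.newVert_localRot_symm (x : (E ⊕ Fin 4) × Bool) :
    S.newVert dir ((S.localRot dir (S.newVert dir x)).symm x) = S.newVert dir x := by
  rcases h : S.newVert dir x with u | i
  · obtain ⟨y, rfl, hy⟩ := S.exists_of_newVert dir h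
    have hv : D.vert (D.rot.symm y) ≠ v := by rw [vert_rot_symm, hy]; exact u.2
    simp only [Distribution.localRot, extendRot_symm_inl, S.newVert_oldEnd dir hv, vert_rot_symm,
      hy]
  · rw [← S.mem_newList_iff] at h ⊢
    refine List.mem_of_formPerm_apply_mem (l := S.newList dir i) ?_
    simpa [Distribution.localRot] using h

/-- The clockwise rotation of the expanded digraph. -/
noncomputable def Distribution.newRot : Equiv.Perm ((E ⊕ Fin 4) × Bool) :=
  gluePerm (S.newVert dir) (S.localRot dir) (S.newVert_localRot dir) (S.newVert_localRot_symm dir)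

theorem Distribution.newVert_newRot_zpow (x : (E ⊕ Fin 4) × Bool) (n : ℤ) :
    S.newVert dir ((S.newRot dir ^ n) x) = S.newVert dir x ∧
      (S.newRot dir ^ n) x = (S.localRot dir (S.newVert dir x) ^ n) x := by
  induction n with
  | zero => simp
  | succ n ih =>
    rw [add_comm, zpow_add, zpow_add, zpow_one, zpow_one, Equiv.Perm.mul_apply,
      Equiv.Perm.mul_apply, ← ih.2]
    constructor
    · rw [← ih.1]; exact S.newVert_localRot dir _
    · conv_rhs => rw [← ih.1]
      rfl
  | pred n ih =>
    rw [sub_eq_add_neg, add_comm, zpow_add, zpow_add, zpow_neg_one, zpow_neg_one,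
      Equiv.Perm.mul_apply, Equiv.Perm.mul_apply, ← ih.2]
    constructor
    · rw [← ih.1]; exact S.newVert_localRot_symm dir _
    · conv_rhs => rw [← ih.1]
      rfl

theorem extendRot_zpow (σ : Equiv.Perm (E × Bool)) (n : ℤ) (x : E × Bool) :
    (extendRot σ ^ n) (oldEnd x) = oldEnd ((σ ^ n) x) := by
  induction n with
  | zero => simp
  | succ n ih =>
    rw [add_comm, zpow_add, zpow_add, zpow_one, zpow_one, Equiv.Perm.mul_apply,
      Equiv.Perm.mul_apply, ih, extendRot_inl]
  | pred n ih =>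
    rw [sub_eq_add_neg, add_comm, zpow_add, zpow_add, zpow_neg_one, zpow_neg_one,
      Equiv.Perm.mul_apply, Equiv.Perm.mul_apply, ih]
    exact extendRot_symm_inl _ _

open Classical in
theorem Distribution.sameCycle_newRot_iff (x y : (E ⊕ Fin 4) × Bool) :
    (S.newRot dir).SameCycle x y ↔ S.newVert dir x = S.newVert dir y := by
  constructor
  · rintro ⟨n, rfl⟩
    exact (S.newVert_newRot_zpow dir x n).1.symm
  · intro h
    suffices (S.localRot dir (S.newVert dir x)).SameCycle x y by
      obtain ⟨n, hn⟩ := this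
      exact ⟨n, by rw [(S.newVert_newRot_zpow dir x n).2, hn]⟩
    rcases hx : S.newVert dir x with u | i
    · obtain ⟨x, rfl, hx'⟩ := S.exists_of_newVert dir hx
      obtain ⟨y, rfl, hy'⟩ := S.exists_of_newVert dir (h ▸ hx)
      obtain ⟨n, hn⟩ := (D.sameCycle_rot_iff x y).2 (hx'.trans hy'.symm)
      exact ⟨n, by rw [Distribution.localRot, extendRot_zpow, hn]⟩
    · have hx' := (S.mem_newList_iff dir x i).2 hx
      have hy' := (S.mem_newList_iff dir y i).2 (h ▸ hx)
      have hl : 2 ≤ (S.newList dir i).length := by simp [Distribution.newList]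
      have hc := List.isCycle_formPerm (S.nodup_newList dir i) hl
      have hne : ∀ z ∈ S.newList dir i, (S.newList dir i).formPerm z ≠ z := fun z hz =>
        (List.formPerm_apply_mem_ne_self_iff _ (S.nodup_newList dir i) z hz).2 hl
      exact hc.sameCycle (hne x hx') (hne y hy')

/-- The expansion of the vertex `v` into a quadrilateral face. Its vertices are the old vertices
other than `v` and the vertices `Sum.inr 0, Sum.inr 1, Sum.inr 2, Sum.inr 3` of the new face in
clockwise order; its edges are the old edges, reattached according to `S`, and the four boundary
edges of the new face, directed according to `dir`. The outer face is the old outer face. -/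
noncomputable def expand (S : D.Distribution v) (dir : Fin 4 → Bool) :
    EmbeddedDigraph ({u : V // u ≠ v} ⊕ Fin 4) (E ⊕ Fin 4) where
  src e := S.newVert dir (e, true)
  tgt e := S.newVert dir (e, false)
  rot := S.newRot dir
  sameCycle_rot_iff := by
    have h : endVertex (fun e => S.newVert dir (e, true)) (fun e => S.newVert dir (e, false)) =
        S.newVert dir := by
      funext ⟨e, k⟩
      cases k <;> simp [endVertex]
    intro x y
    rw [h]
    exact S.sameCycle_newRot_iff dir x y
  outer := oldEnd D.outer

/-- The vertex `i` of the new face lies on the boundary of the outer face. This does not depend on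
how the four boundary edges of the new face are directed. -/
def Distribution.CornerOnOuterFace (i : Fin 4) : Prop :=
  (expand S (fun _ => true)).OnOuterFace (Sum.inr i)

end Expansion

end EmbeddedDigraph

/-! Whichever opposite corners `o` and `o + 2` of the new face are made its origin and destination,
contracting the face turns a directed cycle of the expansion, which cannot stay on the face, into a
closed directed walk of `D`, so the expansion is acyclic. Only `o` can become an additional source
and only `o + 2` an additional sink, and this is avoided if `o` receives an incoming edge unless `v`
is the source, and `o + 2` an outgoing edge unless `v` is the sink. If `v` is the source, say, then
`o + 2` can be any corner that receives an edge, and `o`, which should lie on the outer face if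
possible, is the new source.

Suppose that `v` is neither, and that no `o` is suitable. Then all the edges in two opposite blocks
have the same direction, so either all the edges at `v` have, which is impossible, or the direction
changes four times around `v`. But each edge enters its target through a single angle, which is
either a change from outgoing to incoming at a vertex or a local sink of a face. Every vertex other
than the source and the sink has such a change, and every face has a local sink. Since
`(|V| - 2) + |F| = |E|`, all of them have exactly one, and the direction changes only twice
around `v`.

The faces of the expansion are those of `D` and the new one, so Euler's formula persists: there are
three more vertices, four more edges and one more face. -/

open scoped Fin.CommRing in
theorem forall_of_add_one_imp {n : ℕ} [NeZero n] {P : Fin n → Prop} (h : ∀ i, P (i + 1) → P i)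
    {j : Fin n} (hj : P j) (i : Fin n) : P i := by
  have descend (k : ℕ) (hk : P (i + k)) : P i := by
    induction k with
    | zero => simpa using hk
    | succ k ih => exact ih (h _ (by simpa [add_assoc] using hk))
  exact descend (j - i).val (by simpa using hj)

section General

variable {α : Type*}

theorem rel_of_chain_concat {r : α → α → Prop} {l : List α} {a b : α}
    (h : Cycle.Chain r (l ++ [a] : List α)) (hb : b ∈ (l ++ [a]).head?) : r a b := by
  rw [Cycle.coe_eq_coe.2 (List.isRotated_append (l' := [a])), List.singleton_append,
    Cycle.chain_coe_cons, List.isChain_cons] at h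
  exact h.1 b hb

theorem rel_of_chain_append_cons_cons {r : α → α → Prop} {l₁ l₂ : List α} {a b : α}
    (h : Cycle.Chain r (l₁ ++ a :: b :: l₂ : List α)) : r a b := by
  have hrot : l₁ ++ a :: b :: l₂ ~r (b :: l₂ ++ l₁) ++ [a] := by
    simpa using List.isRotated_append (l := l₁ ++ [a]) (l' := b :: l₂)
  rw [Cycle.coe_eq_coe.2 hrot] at h
  exact rel_of_chain_concat h rfl

theorem formPerm_apply_of_eq_append [DecidableEq α] {l l₁ l₂ : List α} {a b : α}
    (hl : l.Nodup) (h : l = l₁ ++ a :: b :: l₂) : l.formPerm a = b := by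
  subst h
  simpa using List.formPerm_apply_lt_getElem _ hl l₁.length (by simp)

variable {σ : Equiv.Perm α} {x y : α}

theorem rel_of_sameCycle {s : Setoid α} (h : ∀ z, s z (σ z)) (hxy : σ.SameCycle x y) : s x y := by
  obtain ⟨n, rfl⟩ := hxy
  induction n with
  | zero => exact s.refl x
  | succ n ih =>
    rw [add_comm, zpow_add, zpow_one, Equiv.Perm.mul_apply]
    exact s.trans ih (h _)
  | pred n ih =>
    refine s.trans ih (s.symm ?_)
    have := h ((σ ^ (-(n : ℤ) - 1)) x)
    rwa [← Equiv.Perm.mul_apply, ← zpow_one_add, add_sub_cancel] at this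

theorem exists_sameCycle_and_not_apply [Finite α] {p : α → Prop} (hxy : σ.SameCycle x y) (hx : p x)
    (hy : ¬ p y) : ∃ z, σ.SameCycle x z ∧ p z ∧ ¬ p (σ z) := by
  by_contra! h
  obtain ⟨n, rfl⟩ := hxy.exists_nat_pow_eq
  refine hy ?_
  clear hy hxy
  induction n with
  | zero => exact hx
  | succ n ih =>
    rw [pow_succ', Equiv.Perm.mul_apply]
    exact h _ ⟨n, by simp⟩ ih

theorem exists_sameCycle_not_rel [Finite α] {r : α → α → Prop}
    (hr : ∀ z, ¬ Relation.TransGen r z z) (σ : Equiv.Perm α) (x : α) :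
    ∃ z, σ.SameCycle x z ∧ ¬ r z (σ z) := by
  by_contra! h
  have reach (n : ℕ) : Relation.TransGen r x ((σ ^ (n + 1)) x) := by
    induction n with
    | zero => exact .single (h x (.refl _ _))
    | succ n ih =>
      rw [pow_succ', Equiv.Perm.mul_apply]
      exact ih.tail (h _ ⟨n + 1, rfl⟩)
  refine hr x ?_
  simpa [Nat.sub_add_cancel (orderOf_pos σ), pow_orderOf_eq_one] using reach (orderOf σ - 1)

end General

namespace EmbeddedDigraph

section Basic

variable {V E : Type*} {D : EmbeddedDigraph V E}

/-- A source (for `k = false`) or a sink (for `k = true`): a vertex at no edge-end of the form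
`(e, k)`. Treating the two at once spares us the dual half of every argument. -/
def IsPole (D : EmbeddedDigraph V E) (k : Bool) (u : V) : Prop := ∀ e : E, D.vert (e, k) ≠ u

theorem isSource_or_isSink_iff {u : V} : D.IsSource u ∨ D.IsSink u ↔ ∃ k, D.IsPole k u :=
  (Bool.exists_bool (p := (D.IsPole · u))).symm

theorem IsStGraph.existsUnique_isPole (hD : D.IsStGraph) : ∀ k, ∃! u, D.IsPole k u
  | false => hD.2.1
  | true => hD.2.2

theorem IsPole.snd_eq_not {k : Bool} {x : E × Bool} (h : D.IsPole k (D.vert x)) : x.2 = !k :=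
  Bool.eq_not.2 fun hk => h x.1 (by rw [← hk])

theorem vert_surjective (hD : ∀ u w, Relation.EqvGen D.Adj u w) : Function.Surjective D.vert := by
  have hAdj : ∀ u w, D.Adj u w → Setoid.ker (fun u => ∃ x, D.vert x = u) u w := by
    rintro _ _ ⟨e, rfl, rfl⟩
    exact propext ⟨fun _ => ⟨(e, false), rfl⟩, fun _ => ⟨(e, true), rfl⟩⟩
  intro u
  exact (Setoid.eqvGen_le hAdj (hD (D.vert D.outer) u)).mp ⟨D.outer, rfl⟩

theorem not_isPole_not (hD : ∀ u w, Relation.EqvGen D.Adj u w) {k : Bool} {u : V}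
    (h : D.IsPole k u) : ¬ D.IsPole (!k) u := by
  obtain ⟨x, rfl⟩ := vert_surjective hD u
  intro h'
  simpa [h.snd_eq_not] using h'.snd_eq_not

theorem faceNext_apply (x : E × Bool) : D.faceNext x = D.rot (x.1, !x.2) := rfl

theorem vert_faceNext (x : E × Bool) : D.vert (D.faceNext x) = D.vert (x.1, !x.2) := vert_rot _

/-- The face of an edge-end: the one whose boundary walk traverses its edge starting from it. -/
def toFace (D : EmbeddedDigraph V E) (x : E × Bool) : D.Face :=
  Quotient.mk (Equiv.Perm.SameCycle.setoid D.faceNext) x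

theorem toFace_eq_toFace_iff {x y : E × Bool} :
    D.toFace x = D.toFace y ↔ D.faceNext.SameCycle x y := Quotient.eq

theorem toFace_surjective (D : EmbeddedDigraph V E) : Function.Surjective D.toFace :=
  Quotient.mk_surjective

theorem toFace_faceNext (x : E × Bool) : D.toFace (D.faceNext x) = D.toFace x :=
  toFace_eq_toFace_iff.2 (Equiv.Perm.sameCycle_apply_left.2 (.refl _ _))

instance [Finite E] : Finite D.Face := Quotient.finite _

end Basic

section Bimodality

variable {V E : Type*} {D : EmbeddedDigraph V E}

/-- The edge-ends `x` at which `σ` passes from a tail end to a head end. For `σ = D.rot` they are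
the angles from an outgoing edge to the clockwise next edge when that one is incoming. For
`σ = D.faceNext` they are the local sinks of the boundary walks of the faces. -/
def outIn (σ : Equiv.Perm (E × Bool)) : Set (E × Bool) :=
  {x | x.2 = true ∧ (σ x).2 = false}

theorem exists_mem_outIn_of_sameCycle [Finite E] {σ : Equiv.Perm (E × Bool)} {x y : E × Bool}
    (hxy : σ.SameCycle x y) (hx : x.2 = true) (hy : y.2 = false) :
    ∃ z ∈ outIn σ, σ.SameCycle x z := by
  obtain ⟨z, hxz, hz, hσz⟩ :=
    exists_sameCycle_and_not_apply (p := fun z => z.2 = true) hxy hx (by simp [hy])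
  exact ⟨z, ⟨hz, by simpa using hσz⟩, hxz⟩

theorem exists_mem_outIn_rot [Finite E] {u : V} (hu : ∀ k, ¬ D.IsPole k u) :
    ∃ x ∈ outIn D.rot, D.vert x = u := by
  simp only [IsPole, not_forall, not_not] at hu
  obtain ⟨⟨e, he⟩, ⟨e', he'⟩⟩ := hu true, hu false
  obtain ⟨x, hx, hex⟩ :=
    exists_mem_outIn_of_sameCycle ((D.sameCycle_rot_iff _ _).2 (he.trans he'.symm)) rfl rfl
  exact ⟨x, hx, ((D.sameCycle_rot_iff _ _).1 hex).symm.trans he⟩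

theorem adj_vert_faceNext : ∀ {x : E × Bool}, x.2 = true →
    D.Adj (D.vert x) (D.vert (D.faceNext x))
  | (e, _), rfl => ⟨e, rfl, (vert_faceNext (e, true)).symm⟩

theorem adj_faceNext_vert : ∀ {x : E × Bool}, x.2 = false →
    D.Adj (D.vert (D.faceNext x)) (D.vert x)
  | (e, _), rfl => ⟨e, (vert_faceNext (e, false)).symm, rfl⟩

theorem exists_sameCycle_faceNext_snd_eq [Finite E] (hD : ∀ u, ¬ Relation.TransGen D.Adj u u)
    (x : E × Bool) (k : Bool) : ∃ y, D.faceNext.SameCycle x y ∧ y.2 = k := by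
  cases k
  · obtain ⟨y, hxy, hy⟩ := exists_sameCycle_not_rel (r := fun y z => D.Adj (D.vert y) (D.vert z))
      (fun y hy => hD _ (hy.lift D.vert fun _ _ => id)) D.faceNext x
    exact ⟨y, hxy, Bool.eq_false_of_not_eq_true (mt adj_vert_faceNext hy)⟩
  · obtain ⟨y, hxy, hy⟩ := exists_sameCycle_not_rel (r := fun y z => D.Adj (D.vert z) (D.vert y))
      (fun y hy => hD _ (Relation.transGen_swap.1 (hy.lift D.vert fun _ _ => id))) D.faceNext x
    exact ⟨y, hxy, Bool.eq_true_of_not_eq_false (mt adj_faceNext_vert hy)⟩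

theorem exists_mem_outIn_faceNext [Finite E] (hD : ∀ u, ¬ Relation.TransGen D.Adj u u)
    (f : D.Face) : ∃ x ∈ outIn D.faceNext, D.toFace x = f := by
  obtain ⟨x, rfl⟩ := D.toFace_surjective f
  obtain ⟨y, hxy, hy⟩ := exists_sameCycle_faceNext_snd_eq hD x true
  obtain ⟨z, hxz, hz⟩ := exists_sameCycle_faceNext_snd_eq hD x false
  obtain ⟨w, hw, hyw⟩ := exists_mem_outIn_of_sameCycle (hxy.symm.trans hxz) hy hz
  exact ⟨w, hw, toFace_eq_toFace_iff.2 (hxy.trans hyw).symm⟩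

theorem card_outIn_rot_add_card_outIn_faceNext_le [Finite E] (D : EmbeddedDigraph V E) :
    Nat.card (outIn D.rot) + Nat.card (outIn D.faceNext) ≤ Nat.card E := by
  rw [← Nat.card_sum]
  refine Nat.card_le_card_of_injective
    (Sum.elim (fun x => (D.rot x).1) fun x => (D.faceNext x).1) ?_
  have ext_of_false {x y : E × Bool} (h : x.1 = y.1) (hx : x.2 = false) (hy : y.2 = false) :
      x = y := Prod.ext h (hx.trans hy.symm)
  have rot_ne {x y : E × Bool} (hx : x ∈ outIn D.rot) (hy : y ∈ outIn D.faceNext) :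
      (D.rot x).1 ≠ (D.faceNext y).1 := by
    intro h
    have hxy : x = (y.1, !y.2) := D.rot.injective (ext_of_false h hx.2 hy.2)
    simpa [hxy, hy.1] using hx.1
  rintro (⟨x, hx⟩ | ⟨x, hx⟩) (⟨y, hy⟩ | ⟨y, hy⟩) h
  · simpa using D.rot.injective (ext_of_false h hx.2 hy.2)
  · exact absurd h (rot_ne hx hy)
  · exact absurd h.symm (rot_ne hy hx)
  · simpa using D.faceNext.injective (ext_of_false h hx.2 hy.2)

theorem IsStGraph.card_forall_not_isPole_add_two [Finite V]
    (hD : D.IsStGraph) (hconn : ∀ u w, Relation.EqvGen D.Adj u w) :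
    Nat.card {u : V // ∀ k, ¬ D.IsPole k u} + 2 = Nat.card V := by
  obtain ⟨s, hs, hs'⟩ := hD.existsUnique_isPole false
  obtain ⟨t, ht, ht'⟩ := hD.existsUnique_isPole true
  have hst : s ≠ t := fun h => not_isPole_not hconn hs (h ▸ ht)
  have hcompl : {u : V | ∀ k, ¬ D.IsPole k u} = ({s, t} : Set V)ᶜ := by
    ext u
    have hsu : D.IsPole false u ↔ u = s := ⟨hs' u, fun h => h ▸ hs⟩
    have htu : D.IsPole true u ↔ u = t := ⟨ht' u, fun h => h ▸ ht⟩
    simp [hsu, htu]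
  rw [← Set.coe_ofPred, Nat.card_coe_set_eq, hcompl, ← Set.ncard_pair hst, add_comm]
  exact Set.ncard_add_ncard_compl _

/-- In a plane embedding of an st-graph the incoming edges of a vertex are consecutive, and so are
the outgoing ones. -/
theorem injOn_vert_outIn_rot [Finite V] [Finite E] (hP : D.IsPlane) (hD : D.IsStGraph) :
    Set.InjOn D.vert (outIn D.rot) := by
  have inner (x : outIn D.rot) (k : Bool) : ¬ D.IsPole k (D.vert x) := by
    obtain ⟨x, hx, hrx⟩ := x
    cases k with
    | true => exact fun h => by simpa [hx] using h.snd_eq_not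
    | false =>
      rw [← vert_rot]
      exact fun h => by simpa [hrx] using h.snd_eq_not
  let f : outIn D.rot → {u : V // ∀ k, ¬ D.IsPole k u} := fun x => ⟨D.vert x, inner x⟩
  have hf : Function.Surjective f := fun u =>
    let ⟨x, hx, hxu⟩ := exists_mem_outIn_rot u.2
    ⟨⟨x, hx⟩, Subtype.ext hxu⟩
  have hface : Function.Surjective fun x : outIn D.faceNext => D.toFace x := fun φ =>
    let ⟨x, hx, hxφ⟩ := exists_mem_outIn_faceNext hD.1 φ
    ⟨⟨x, hx⟩, hxφ⟩
  have hcard : Nat.card (outIn D.rot) ≤ Nat.card {u : V // ∀ k, ¬ D.IsPole k u} := by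
    have := card_outIn_rot_add_card_outIn_faceNext_le D
    have := Nat.card_le_card_of_surjective _ hface
    have := hD.card_forall_not_isPole_add_two hP.1
    have := hP.2
    omega
  have hinj : Function.Injective f := (hf.bijective_of_nat_card_le hcard).1
  intro x hx y hy hxy
  exact congrArg Subtype.val (@hinj ⟨x, hx⟩ ⟨y, hy⟩ (Subtype.ext hxy))

end Bimodality

section Blocks

variable {V E : Type*} {D : EmbeddedDigraph V E} {v : V} (S : D.Distribution v)

/-- The edge-ends at `v` in clockwise order, starting with the block `i`. -/
def Distribution.blocksFrom (i : Fin 4) : List (E × Bool) :=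
  S.block i ++ S.block (i + 1) ++ S.block (i + 2) ++ S.block (i + 3)

theorem Distribution.blocksFrom_add_one (i : Fin 4) :
    S.blocksFrom (i + 1) = S.block (i + 1) ++ S.block (i + 2) ++ S.block (i + 3) ++ S.block i := by
  simp [blocksFrom, add_assoc]

theorem Distribution.isRotated_blocksFrom (i : Fin 4) :
    S.blocksFrom (i + 1) ~r S.blocksFrom i := by
  rw [S.blocksFrom_add_one]
  simpa [blocksFrom] using List.isRotated_append
    (l := S.block (i + 1) ++ S.block (i + 2) ++ S.block (i + 3)) (l' := S.block i)

theorem Distribution.mem_blocksFrom {x : E × Bool} {i : Fin 4} :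
    x ∈ S.blocksFrom i ↔ D.vert x = v :=
  forall_of_add_one_imp (P := fun i => x ∈ S.blocksFrom i ↔ D.vert x = v)
    (fun i h => (S.isRotated_blocksFrom i).mem_iff.symm.trans h) (S.mem_iff x) i

theorem Distribution.chain_blocksFrom (i : Fin 4) :
    Cycle.Chain (fun x y => D.rot x = y) (S.blocksFrom i : Cycle (E × Bool)) :=
  forall_of_add_one_imp (P := fun i => Cycle.Chain (fun x y => D.rot x = y) (S.blocksFrom i))
    (fun i h => Cycle.coe_eq_coe.2 (S.isRotated_blocksFrom i) ▸ h) S.clockwise i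

theorem Distribution.vert_of_mem_block {i : Fin 4} {x : E × Bool} (h : x ∈ S.block i) :
    D.vert x = v :=
  (S.mem_blocksFrom (i := i)).1 (by simp [blocksFrom, h])

theorem Distribution.exists_mem_block {x : E × Bool} (h : D.vert x = v) : ∃ i, x ∈ S.block i :=
  ⟨_, (S.corner_eq_iff h _).1 rfl⟩

theorem Distribution.eq_of_mem_block_of_mem_block {i j : Fin 4} {x : E × Bool}
    (hi : x ∈ S.block i) (hj : x ∈ S.block j) : i = j := by
  have h := S.vert_of_mem_block hi
  rw [← (S.corner_eq_iff h i).2 hi, (S.corner_eq_iff h j).2 hj]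

theorem Distribution.head?_blocksFrom_of_cons {i : Fin 4} {a : E × Bool} {l : List (E × Bool)}
    (h : S.block i = a :: l) : (S.blocksFrom i).head? = some a := by
  simp [blocksFrom, h]

theorem Distribution.blocksFrom_of_nil {i : Fin 4} (h : S.block i = []) :
    S.blocksFrom i = S.blocksFrom (i + 1) := by
  rw [S.blocksFrom_add_one]
  simp [blocksFrom, h]

theorem Distribution.exists_head?_blocksFrom (hv : ∃ x, D.vert x = v) (i : Fin 4) :
    ∃ a, (S.blocksFrom i).head? = some a := by
  obtain ⟨x, hx⟩ := hv
  exact Option.isSome_iff_exists.1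
    (List.isSome_head?.2 (List.ne_nil_of_mem ((S.mem_blocksFrom (i := i)).2 hx)))

theorem Distribution.rot_eq_of_block_eq {i : Fin 4} {l₁ l₂ : List (E × Bool)} {a b : E × Bool}
    (h : S.block i = l₁ ++ a :: b :: l₂) : D.rot a = b :=
  rel_of_chain_append_cons_cons (r := fun x y => D.rot x = y) (l₁ := l₁)
    (l₂ := l₂ ++ S.block (i + 1) ++ S.block (i + 2) ++ S.block (i + 3))
    (by simpa [blocksFrom, h] using S.chain_blocksFrom i)

theorem Distribution.head?_blocksFrom_eq_rot {i : Fin 4} {l : List (E × Bool)} {a : E × Bool}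
    (h : S.block i = l ++ [a]) : (S.blocksFrom (i + 1)).head? = some (D.rot a) := by
  have ha : D.vert a = v := S.vert_of_mem_block (i := i) (by simp [h])
  obtain ⟨b, hb⟩ := S.exists_head?_blocksFrom ⟨a, ha⟩ (i + 1)
  have hchain := S.chain_blocksFrom (i + 1)
  rw [S.blocksFrom_add_one, h, ← List.append_assoc] at hb hchain
  rw [S.blocksFrom_add_one, h, ← List.append_assoc, hb, rel_of_chain_concat hchain hb]

theorem Distribution.exists_rot_mem_block_add_one {i : Fin 4} (hi : S.block i ≠ [])
    (hi' : S.block (i + 1) ≠ []) : ∃ x ∈ S.block i, D.rot x ∈ S.block (i + 1) := by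
  obtain ⟨l, a, ha⟩ := (List.eq_nil_or_concat' (S.block i)).resolve_left hi
  obtain ⟨b, m, hb⟩ := List.exists_cons_of_ne_nil hi'
  have hab := (S.head?_blocksFrom_of_cons hb).symm.trans (S.head?_blocksFrom_eq_rot ha)
  exact ⟨a, by simp [ha], by simp [hb, ← Option.some.inj hab]⟩

end Blocks

section Rotation

variable {V E : Type*} {D : EmbeddedDigraph V E} {v : V} (S : D.Distribution v)
  (dir : Fin 4 → Bool)

/-- The boundary edge of the new face between the corners `i` and `i + 1`, traversed from `i` to
`i + 1`: this is the side of it that does not face the new face. -/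
def outerSide (dir : Fin 4 → Bool) (i : Fin 4) : (E ⊕ Fin 4) × Bool := (Sum.inr i, dir i)

/-- The boundary edge of the new face between the corners `i` and `i + 1`, traversed from `i + 1`
to `i`, with the new face on its left. -/
def innerSide (dir : Fin 4 → Bool) (i : Fin 4) : (E ⊕ Fin 4) × Bool := (Sum.inr i, !dir i)

theorem eq_oldEnd_or_outerSide_or_innerSide (x : (E ⊕ Fin 4) × Bool) :
    (∃ y, x = oldEnd y) ∨ (∃ i, x = outerSide dir i) ∨ ∃ i, x = innerSide dir i := by
  obtain ⟨e | i, k⟩ := x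
  · exact Or.inl ⟨(e, k), rfl⟩
  · rcases Bool.eq_or_eq_not k (dir i) with rfl | rfl
    exacts [Or.inr (Or.inl ⟨i, rfl⟩), Or.inr (Or.inr ⟨i, rfl⟩)]

theorem expand_vert (x : (E ⊕ Fin 4) × Bool) : (expand S dir).vert x = S.newVert dir x := by
  obtain ⟨e, k⟩ := x
  cases k <;> simp [vert, endVertex, expand]

theorem Distribution.newVert_outerSide (i : Fin 4) :
    S.newVert dir (outerSide dir i) = Sum.inr i := by
  simp [outerSide, newVert]

theorem Distribution.newVert_oldEnd_eq_inr_iff {x : E × Bool} {i : Fin 4} :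
    S.newVert dir (oldEnd x) = Sum.inr i ↔ x ∈ S.block i := by
  by_cases hx : D.vert x = v
  · simp [← S.corner_eq_iff hx, newVert, oldEnd, hx]
  · simpa [S.newVert_oldEnd dir hx] using mt S.vert_of_mem_block hx

theorem Distribution.newVert_oldEnd_eq_inl_iff {x : E × Bool} {u : {u : V // u ≠ v}} :
    S.newVert dir (oldEnd x) = Sum.inl u ↔ D.vert x = u := by
  by_cases hx : D.vert x = v
  · simpa [newVert, oldEnd, hx] using u.2.symm
  · simp [S.newVert_oldEnd dir hx, Subtype.ext_iff]

theorem Distribution.newList_eq (i : Fin 4) : S.newList dir i =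
    innerSide dir (i - 1) :: ((S.block i).map oldEnd ++ [outerSide dir i]) := rfl

open Classical in
theorem Distribution.newRot_of_mem_newList {x : (E ⊕ Fin 4) × Bool} {i : Fin 4}
    (h : x ∈ S.newList dir i) : S.newRot dir x = (S.newList dir i).formPerm x := by
  change S.localRot dir (S.newVert dir x) x = _
  rw [(S.mem_newList_iff dir x i).1 h]
  rfl

theorem Distribution.newRot_of_newList_eq {i : Fin 4} {l₁ l₂ : List ((E ⊕ Fin 4) × Bool)}
    {a b : (E ⊕ Fin 4) × Bool} (h : S.newList dir i = l₁ ++ a :: b :: l₂) :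
    S.newRot dir a = b := by
  classical
  rw [S.newRot_of_mem_newList dir (i := i) (by simp [h])]
  exact formPerm_apply_of_eq_append (S.nodup_newList dir i) h

theorem Distribution.newRot_oldEnd_of_vert_ne {x : E × Bool} (h : D.vert x ≠ v) :
    S.newRot dir (oldEnd x) = oldEnd (D.rot x) := by
  change S.localRot dir (S.newVert dir (oldEnd x)) (oldEnd x) = _
  rw [S.newVert_oldEnd dir h]
  rfl

theorem Distribution.newRot_oldEnd (x : E × Bool) :
    S.newRot dir (oldEnd x) = oldEnd (D.rot x) ∨
      ∃ i, S.newRot dir (oldEnd x) = outerSide dir i ∧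
        (S.blocksFrom (i + 1)).head? = some (D.rot x) := by
  by_cases hx : D.vert x = v
  · obtain ⟨i, hi⟩ := S.exists_mem_block hx
    obtain ⟨l₁, l₂, h⟩ := List.append_of_mem hi
    rcases l₂ with _ | ⟨y, l₂⟩
    · exact Or.inr ⟨i, S.newRot_of_newList_eq dir (i := i)
        (l₁ := innerSide dir (i - 1) :: l₁.map oldEnd) (l₂ := []) (by simp [newList_eq, h]),
        S.head?_blocksFrom_eq_rot h⟩
    · rw [S.rot_eq_of_block_eq h]
      exact Or.inl (S.newRot_of_newList_eq dir (i := i)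
        (l₁ := innerSide dir (i - 1) :: l₁.map oldEnd) (l₂ := l₂.map oldEnd ++ [outerSide dir i])
        (by simp [newList_eq, h]))
  · exact Or.inl (S.newRot_oldEnd_of_vert_ne dir hx)

theorem Distribution.newRot_innerSide_of_nil {i : Fin 4} (h : S.block (i + 1) = []) :
    S.newRot dir (innerSide dir i) = outerSide dir (i + 1) :=
  S.newRot_of_newList_eq dir (i := i + 1) (l₁ := []) (l₂ := []) (by simp [newList_eq, h])

theorem Distribution.newRot_innerSide_of_cons {i : Fin 4} {l : List (E × Bool)} {a : E × Bool}
    (h : S.block (i + 1) = a :: l) : S.newRot dir (innerSide dir i) = oldEnd a :=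
  S.newRot_of_newList_eq dir (i := i + 1) (l₁ := [])
    (l₂ := l.map oldEnd ++ [outerSide dir (i + 1)]) (by simp [newList_eq, h])

theorem Distribution.newRot_outerSide (i : Fin 4) :
    S.newRot dir (outerSide dir i) = innerSide dir (i - 1) := by
  classical
  rw [S.newRot_of_mem_newList dir (i := i) (by simp [newList_eq])]
  simp [newList_eq]

theorem Distribution.faceNext_oldEnd (x : E × Bool) :
    (expand S dir).faceNext (oldEnd x) = oldEnd (D.faceNext x) ∨
      ∃ i, (expand S dir).faceNext (oldEnd x) = outerSide dir i ∧
        (S.blocksFrom (i + 1)).head? = some (D.faceNext x) :=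
  S.newRot_oldEnd dir (x.1, !x.2)

theorem Distribution.faceNext_outerSide_of_nil {i : Fin 4} (h : S.block (i + 1) = []) :
    (expand S dir).faceNext (outerSide dir i) = outerSide dir (i + 1) :=
  S.newRot_innerSide_of_nil dir h

theorem Distribution.faceNext_outerSide_of_cons {i : Fin 4} {l : List (E × Bool)} {a : E × Bool}
    (h : S.block (i + 1) = a :: l) : (expand S dir).faceNext (outerSide dir i) = oldEnd a :=
  S.newRot_innerSide_of_cons dir h

theorem Distribution.faceNext_innerSide (i : Fin 4) :
    (expand S dir).faceNext (innerSide dir i) = innerSide dir (i - 1) := by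
  rw [faceNext_apply, ← S.newRot_outerSide]
  simp [expand, innerSide, outerSide]

end Rotation

section Faces

variable {V E : Type*} {D : EmbeddedDigraph V E} {v : V} (S : D.Distribution v)
  (dir : Fin 4 → Bool)

/-- The old face that a face of the expanded digraph comes from, or `none` for the new face. The
outer side of a boundary edge of the new face belongs to the old face at the angle between the
last edge-end before it and the first one after it, clockwise around `v`. -/
def Distribution.oldFace : (E ⊕ Fin 4) × Bool → Option D.Face
  | (Sum.inl e, k) => some (D.toFace (e, k))
  | (Sum.inr i, k) => if k = dir i then (S.blocksFrom (i + 1)).head?.map D.toFace else none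

theorem Distribution.oldFace_oldEnd (x : E × Bool) :
    S.oldFace dir (oldEnd x) = some (D.toFace x) := rfl

theorem Distribution.oldFace_outerSide (i : Fin 4) :
    S.oldFace dir (outerSide dir i) = (S.blocksFrom (i + 1)).head?.map D.toFace := by
  simp [oldFace, outerSide]

theorem Distribution.oldFace_innerSide (i : Fin 4) : S.oldFace dir (innerSide dir i) = none := by
  simp [oldFace, innerSide]

theorem Distribution.oldFace_faceNext (x : (E ⊕ Fin 4) × Bool) :
    S.oldFace dir ((expand S dir).faceNext x) = S.oldFace dir x := by
  rcases eq_oldEnd_or_outerSide_or_innerSide dir x with ⟨y, rfl⟩ | ⟨i, rfl⟩ | ⟨i, rfl⟩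
  · rcases S.faceNext_oldEnd dir y with h | ⟨i, h, hi⟩
    · rw [h, oldFace_oldEnd, oldFace_oldEnd, toFace_faceNext]
    · rw [h, oldFace_outerSide, hi, Option.map_some, toFace_faceNext, oldFace_oldEnd]
  · rcases h : S.block (i + 1) with _ | ⟨a, l⟩
    · rw [S.faceNext_outerSide_of_nil dir h, oldFace_outerSide, oldFace_outerSide,
        S.blocksFrom_of_nil h]
    · rw [S.faceNext_outerSide_of_cons dir h, oldFace_outerSide, S.head?_blocksFrom_of_cons h,
        oldFace_oldEnd, Option.map_some]
  · rw [S.faceNext_innerSide, oldFace_innerSide, oldFace_innerSide]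

theorem Distribution.oldFace_eq_of_sameCycle {x y : (E ⊕ Fin 4) × Bool}
    (h : (expand S dir).faceNext.SameCycle x y) : S.oldFace dir x = S.oldFace dir y :=
  rel_of_sameCycle (s := Setoid.ker (S.oldFace dir)) (fun z => (S.oldFace_faceNext dir z).symm) h

theorem Distribution.sameCycle_outerSide {i : Fin 4} {a : E × Bool}
    (ha : (S.blocksFrom (i + 1)).head? = some a) :
    (expand S dir).faceNext.SameCycle (outerSide dir i) (oldEnd a) := by
  let P (i : Fin 4) : Prop := (S.blocksFrom (i + 1)).head? = some a →
    (expand S dir).faceNext.SameCycle (outerSide dir i) (oldEnd a)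
  have of_cons (i : Fin 4) (hi : S.block (i + 1) ≠ []) : P i := by
    intro ha
    obtain ⟨b, l, h⟩ := List.exists_cons_of_ne_nil hi
    obtain rfl : b = a := Option.some.inj ((S.head?_blocksFrom_of_cons h).symm.trans ha)
    rw [← S.faceNext_outerSide_of_cons dir h]
    exact Equiv.Perm.sameCycle_apply_right.2 (.refl _ _)
  have of_add_one (i : Fin 4) (hi : P (i + 1)) : P i := by
    by_cases h : S.block (i + 1) = []
    · intro ha
      rw [S.blocksFrom_of_nil h] at ha
      rw [← Equiv.Perm.sameCycle_apply_left, S.faceNext_outerSide_of_nil dir h]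
      exact hi ha
    · exact of_cons i h
  obtain ⟨j, hj⟩ := S.exists_mem_block (S.mem_blocksFrom.1 (List.mem_of_mem_head? ha))
  refine forall_of_add_one_imp of_add_one (of_cons (j - 1) ?_) i ha
  simpa using List.ne_nil_of_mem hj

theorem Distribution.sameCycle_oldEnd {x y : E × Bool} (h : D.faceNext.SameCycle x y) :
    (expand S dir).faceNext.SameCycle (oldEnd x) (oldEnd y) := by
  refine rel_of_sameCycle (s := (Equiv.Perm.SameCycle.setoid _).comap oldEnd) (fun z => ?_) h
  change (expand S dir).faceNext.SameCycle (oldEnd z) (oldEnd (D.faceNext z))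
  rw [← Equiv.Perm.sameCycle_apply_left]
  rcases S.faceNext_oldEnd dir z with hz | ⟨i, hz, hi⟩
  · rw [hz]
  · rw [hz]
    exact S.sameCycle_outerSide dir hi

theorem Distribution.sameCycle_innerSide (i j : Fin 4) :
    (expand S dir).faceNext.SameCycle (innerSide dir i) (innerSide dir j) := by
  refine forall_of_add_one_imp (P := fun i => (expand S dir).faceNext.SameCycle (innerSide dir i)
    (innerSide dir j)) (fun i hi => ?_) (.refl _ _) i
  have := S.faceNext_innerSide dir (i + 1)
  rw [add_sub_cancel_right] at this
  rwa [← this, Equiv.Perm.sameCycle_apply_left]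

theorem Distribution.exists_sameCycle_oldEnd (hv : ∃ x, D.vert x = v) (x : (E ⊕ Fin 4) × Bool) :
    (∃ y, (expand S dir).faceNext.SameCycle x (oldEnd y)) ∨ ∃ i, x = innerSide dir i := by
  rcases eq_oldEnd_or_outerSide_or_innerSide dir x with ⟨y, rfl⟩ | ⟨i, rfl⟩ | h
  · exact Or.inl ⟨y, .refl _ _⟩
  · obtain ⟨a, ha⟩ := S.exists_head?_blocksFrom hv (i + 1)
    exact Or.inl ⟨a, S.sameCycle_outerSide dir ha⟩
  · exact Or.inr h

theorem Distribution.sameCycle_iff_oldFace_eq (hv : ∃ x, D.vert x = v)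
    {x y : (E ⊕ Fin 4) × Bool} :
    (expand S dir).faceNext.SameCycle x y ↔ S.oldFace dir x = S.oldFace dir y := by
  refine ⟨S.oldFace_eq_of_sameCycle dir, fun h => ?_⟩
  rcases S.exists_sameCycle_oldEnd dir hv x with ⟨a, hxa⟩ | ⟨i, rfl⟩ <;>
    rcases S.exists_sameCycle_oldEnd dir hv y with ⟨b, hyb⟩ | ⟨j, rfl⟩
  · rw [S.oldFace_eq_of_sameCycle dir hxa, S.oldFace_eq_of_sameCycle dir hyb, oldFace_oldEnd,
      oldFace_oldEnd, Option.some_inj, toFace_eq_toFace_iff] at h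
    exact hxa.trans ((S.sameCycle_oldEnd dir h).trans hyb.symm)
  · simp [S.oldFace_eq_of_sameCycle dir hxa, oldFace_oldEnd, oldFace_innerSide] at h
  · simp [S.oldFace_eq_of_sameCycle dir hyb, oldFace_oldEnd, oldFace_innerSide] at h
  · exact S.sameCycle_innerSide dir i j

theorem Distribution.oldFace_surjective : Function.Surjective (S.oldFace dir)
  | none => ⟨_, S.oldFace_innerSide dir 0⟩
  | some f => (D.toFace_surjective f).elim fun x hx => ⟨oldEnd x, congrArg some hx⟩

theorem Distribution.card_face_expand [Finite E] (hv : ∃ x, D.vert x = v) :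
    Nat.card (expand S dir).Face = Nat.card D.Face + 1 := by
  rw [← Finite.card_option]
  exact Nat.card_congr ((Quotient.congrRight fun _ _ => S.sameCycle_iff_oldFace_eq dir hv).trans
    (Setoid.quotientKerEquivOfSurjective _ (S.oldFace_surjective dir)))

theorem Distribution.onOuterFace_inr_iff (hv : ∃ x, D.vert x = v) (i : Fin 4) :
    (expand S dir).OnOuterFace (Sum.inr i) ↔
      (∃ x ∈ S.block i, D.toFace x = D.toFace D.outer) ∨
        (S.blocksFrom (i + 1)).head?.map D.toFace = some (D.toFace D.outer) := by
  have houter : S.oldFace dir (expand S dir).outer = some (D.toFace D.outer) := rfl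
  simp only [OnOuterFace, S.sameCycle_iff_oldFace_eq dir hv, houter, expand_vert]
  constructor
  · rintro ⟨x, hx, hxi⟩
    rcases eq_oldEnd_or_outerSide_or_innerSide dir x with ⟨y, rfl⟩ | ⟨j, rfl⟩ | ⟨j, rfl⟩
    · exact Or.inl ⟨y, (S.newVert_oldEnd_eq_inr_iff dir).1 hxi, (Option.some.inj hx).symm⟩
    · rw [S.newVert_outerSide, Sum.inr.injEq] at hxi
      rw [S.oldFace_outerSide, hxi] at hx
      exact Or.inr hx.symm
    · simp [S.oldFace_innerSide] at hx
  · rintro (⟨x, hx, h⟩ | h)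
    · exact ⟨oldEnd x, by rw [S.oldFace_oldEnd, h], (S.newVert_oldEnd_eq_inr_iff dir).2 hx⟩
    · exact ⟨outerSide dir i, by rw [S.oldFace_outerSide, h], S.newVert_outerSide dir i⟩

theorem Distribution.onOuterFace_inr_iff_cornerOnOuterFace (hv : ∃ x, D.vert x = v) {i : Fin 4} :
    (expand S dir).OnOuterFace (Sum.inr i) ↔ S.CornerOnOuterFace i :=
  (S.onOuterFace_inr_iff dir hv i).trans (S.onOuterFace_inr_iff _ hv i).symm

theorem Distribution.onOuterFace_inl {u : {u : V // u ≠ v}} (h : D.OnOuterFace u) :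
    (expand S dir).OnOuterFace (Sum.inl u) := by
  obtain ⟨x, hx, hxu⟩ := h
  refine ⟨oldEnd x, S.sameCycle_oldEnd dir hx, ?_⟩
  rw [expand_vert, S.newVert_oldEnd_eq_inl_iff, hxu]

theorem Distribution.exists_cornerOnOuterFace (h : D.OnOuterFace v) :
    ∃ i, S.CornerOnOuterFace i := by
  obtain ⟨x, hx, hxv⟩ := h
  obtain ⟨i, hi⟩ := S.exists_mem_block hxv
  refine ⟨i, oldEnd x, S.sameCycle_oldEnd _ hx, ?_⟩
  rwa [expand_vert, S.newVert_oldEnd_eq_inr_iff]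

end Faces

section Plane

variable {V E : Type*} {D : EmbeddedDigraph V E} {v : V} (S : D.Distribution v)
  (dir : Fin 4 → Bool)

/-- The contraction of the new face back to `v`, on vertices. -/
def contract : {u : V // u ≠ v} ⊕ Fin 4 → V := Sum.elim Subtype.val fun _ => v

theorem Distribution.contract_newVert_oldEnd (x : E × Bool) :
    contract (S.newVert dir (oldEnd x)) = D.vert x := by
  rcases h : S.newVert dir (oldEnd x) with u | i
  · exact ((S.newVert_oldEnd_eq_inl_iff dir).1 h).symm
  · exact (S.vert_of_mem_block ((S.newVert_oldEnd_eq_inr_iff dir).1 h)).symm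

theorem contract_surjective : Function.Surjective (contract (v := v)) := by
  intro u
  by_cases h : u = v
  exacts [⟨Sum.inr 0, h.symm⟩, ⟨Sum.inl ⟨u, h⟩, rfl⟩]

theorem Distribution.eqvGen_adj_inr (i j : Fin 4) :
    Relation.EqvGen (expand S dir).Adj (Sum.inr i) (Sum.inr j) := by
  refine forall_of_add_one_imp (P := fun i => Relation.EqvGen (expand S dir).Adj (Sum.inr i)
    (Sum.inr j)) (fun i hi => .trans _ _ _ ?_ hi) (.refl _) i
  cases h : dir i
  · exact .symm _ _ (.rel _ _ ⟨Sum.inr i, by simp [expand, newVert, h]⟩)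
  · exact .rel _ _ ⟨Sum.inr i, by simp [expand, newVert, h]⟩

theorem Distribution.eqvGen_adj_of_contract_eq {p q : {u : V // u ≠ v} ⊕ Fin 4}
    (h : contract p = contract q) : Relation.EqvGen (expand S dir).Adj p q := by
  rcases p with p | i <;> rcases q with q | j
  · rw [Subtype.ext h]
    exact .refl _
  · exact absurd h p.2
  · exact absurd h.symm q.2
  · exact S.eqvGen_adj_inr dir i j

theorem Distribution.eqvGen_adj_expand (hD : ∀ u w, Relation.EqvGen D.Adj u w)
    (p q : {u : V // u ≠ v} ⊕ Fin 4) : Relation.EqvGen (expand S dir).Adj p q := by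
  let lift := Function.surjInv (contract_surjective (v := v))
  have contract_lift (u : V) : contract (lift u) = u := Function.surjInv_eq _ u
  have lift_adj (u w : V) (h : D.Adj u w) :
      (Relation.EqvGen.setoid (expand S dir).Adj).comap lift u w := by
    obtain ⟨e, rfl, rfl⟩ := h
    refine .trans _ _ _ ?_ (.trans _ _ _ (.rel _ _ ⟨Sum.inl e, rfl, rfl⟩) ?_)
    · exact S.eqvGen_adj_of_contract_eq dir
        ((contract_lift _).trans (S.contract_newVert_oldEnd dir (e, true)).symm)
    · exact S.eqvGen_adj_of_contract_eq dir
        ((S.contract_newVert_oldEnd dir (e, false)).trans (contract_lift _).symm)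
  refine .trans _ _ _ (S.eqvGen_adj_of_contract_eq dir (contract_lift _).symm)
    (.trans _ _ _ ?_ (S.eqvGen_adj_of_contract_eq dir (contract_lift _)))
  exact Setoid.eqvGen_le lift_adj (hD (contract p) (contract q))

theorem Distribution.isPlane_expand [Finite V] [Finite E] (hD : D.IsPlane) :
    (expand S dir).IsPlane := by
  refine ⟨S.eqvGen_adj_expand dir hD.1, ?_⟩
  have card_ne : Nat.card {u : V // u ≠ v} + 1 = Nat.card V := by
    classical
    rw [← Finite.card_option]
    exact Nat.card_congr (Equiv.optionSubtypeNe v)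
  have euler := hD.2
  rw [S.card_face_expand dir (vert_surjective hD.1 v), Nat.card_sum, Nat.card_sum, Nat.card_fin]
  omega

end Plane

section Orientation

variable {V E : Type*} {D : EmbeddedDigraph V E} {v : V} (S : D.Distribution v)

/-- The directions of the boundary edges of the new face that make it consist of two directed paths
from `o` to `o + 2`. -/
def quadDir (o i : Fin 4) : Bool := decide (i = o ∨ i = o + 1)

/-- The origin `o` (for `k = false`) and the destination `o + 2` (for `k = true`) of the new face
directed by `quadDir o`: the only vertices of it that can be a source, respectively a sink. -/
def quadPole (o : Fin 4) (k : Bool) : Fin 4 := if k then o + 2 else o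

theorem quadPole_quadPole (i : Fin 4) (k : Bool) : quadPole (quadPole i k) k = i := by
  revert i k
  decide

theorem quadPole_quadPole_not (i : Fin 4) (k : Bool) : quadPole (quadPole i k) (!k) = i + 2 := by
  revert i k
  decide

/-- The origins `o` for which directing the new face by `quadDir o` creates no additional source or
sink: where an edge is needed to prevent this, there is one of the right direction. -/
def Distribution.IsAdmissibleOrigin (o : Fin 4) : Prop :=
  ∀ k, D.IsPole k v ∨ ∃ x ∈ S.block (quadPole o k), x.2 = k

theorem Distribution.not_transGen_adj_expand_quadDir (hD : ∀ u, ¬ Relation.TransGen D.Adj u u)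
    (o : Fin 4) (p : {u : V // u ≠ v} ⊕ Fin 4) :
    ¬ Relation.TransGen (expand S (quadDir o)).Adj p p := by
  let rank (i : Fin 4) : ℕ := if i = o then 0 else if i = o + 2 then 2 else 1
  let height (p : {u : V // u ≠ v} ⊕ Fin 4) : V × ℕ := (contract p, Sum.elim (fun _ => 0) rank p)
  have rank_lt (i : Fin 4) : rank (if true = quadDir o i then i else i + 1) <
      rank (if false = quadDir o i then i else i + 1) := by
    revert o i
    decide
  have height_adj (p q : {u : V // u ≠ v} ⊕ Fin 4) (h : (expand S (quadDir o)).Adj p q) :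
      Prod.Lex (Relation.TransGen D.Adj) (· < ·) (height p) (height q) := by
    obtain ⟨e | i, rfl, rfl⟩ := h
    · refine .left _ _ (.single ⟨e, ?_, ?_⟩)
      · exact (S.contract_newVert_oldEnd (quadDir o) (e, true)).symm
      · exact (S.contract_newVert_oldEnd (quadDir o) (e, false)).symm
    · exact .right _ (rank_lt i)
  have : Std.Irrefl (Relation.TransGen D.Adj) := ⟨hD⟩
  intro hp
  have := Relation.TransGen.lift height height_adj p p hp
  rw [Function.onFun, Relation.transGen_eq_self] at this
  exact irrefl _ this

theorem Distribution.isPole_expand_inl_iff (dir : Fin 4 → Bool) {k : Bool}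
    {u : {u : V // u ≠ v}} : (expand S dir).IsPole k (Sum.inl u) ↔ D.IsPole k u := by
  have hold (e : E) : S.newVert dir (Sum.inl e, k) = Sum.inl u ↔ D.vert (e, k) = u :=
    S.newVert_oldEnd_eq_inl_iff dir (x := (e, k))
  have hnew (i : Fin 4) : S.newVert dir (Sum.inr i, k) ≠ Sum.inl u := Sum.inr_ne_inl
  simp only [IsPole, expand_vert, Sum.forall, ne_eq, hold, hnew, not_false_eq_true, forall_const,
    and_true]

theorem Distribution.isPole_expand_inr_iff {o j : Fin 4} {k : Bool} :
    (expand S (quadDir o)).IsPole k (Sum.inr j) ↔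
      j = quadPole o k ∧ ∀ x ∈ S.block j, x.2 = !k := by
  have hold (e : E) : S.newVert (quadDir o) (Sum.inl e, k) = Sum.inr j ↔ (e, k) ∈ S.block j :=
    S.newVert_oldEnd_eq_inr_iff (quadDir o) (x := (e, k))
  have hnew : (∀ i, S.newVert (quadDir o) (Sum.inr i, k) ≠ Sum.inr j) ↔ j = quadPole o k := by
    simp only [newVert, ne_eq, Sum.inr.injEq]
    clear hold
    revert o j k
    decide
  have hblock : (∀ x ∈ S.block j, x.2 = !k) ↔ ∀ e, (e, k) ∉ S.block j := by
    simp only [Bool.eq_not]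
    exact ⟨fun h e he => h _ he rfl, fun h x hx hk => h x.1 (by rwa [← hk])⟩
  rw [hblock, ← hnew, and_comm]
  simp only [IsPole, expand_vert, Sum.forall, ne_eq, hold]

theorem Distribution.existsUnique_isPole_expand {o : Fin 4} {k : Bool}
    (hD : ∃! u, D.IsPole k u) (ho : D.IsPole k v ∨ ∃ x ∈ S.block (quadPole o k), x.2 = k) :
    ∃! p, (expand S (quadDir o)).IsPole k p := by
  obtain ⟨w, hw, hw_unique⟩ := hD
  rcases ho with hv | ⟨x, hx, hxk⟩
  · refine ⟨Sum.inr (quadPole o k), S.isPole_expand_inr_iff.2 ⟨rfl, fun x hx => ?_⟩, ?_⟩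
    · exact IsPole.snd_eq_not (by rwa [S.vert_of_mem_block hx])
    · rintro (u | j) h
      · have hu := hw_unique u ((S.isPole_expand_inl_iff _).1 h)
        exact absurd (hu.trans (hw_unique v hv).symm) u.2
      · rw [(S.isPole_expand_inr_iff.1 h).1]
  · have hwv : w ≠ v := by
      rintro rfl
      rw [← S.vert_of_mem_block hx] at hw
      simpa [hxk] using hw.snd_eq_not
    refine ⟨Sum.inl ⟨w, hwv⟩, (S.isPole_expand_inl_iff _).2 hw, ?_⟩
    rintro (u | j) h
    · exact congrArg Sum.inl (Subtype.ext (hw_unique u ((S.isPole_expand_inl_iff _).1 h)))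
    · obtain ⟨rfl, hj⟩ := S.isPole_expand_inr_iff.1 h
      simpa [hxk] using hj x hx

variable {S}

theorem Distribution.IsAdmissibleOrigin.isStGraph_expand {o : Fin 4}
    (ho : S.IsAdmissibleOrigin o) (hD : D.IsStGraph) : (expand S (quadDir o)).IsStGraph :=
  ⟨S.not_transGen_adj_expand_quadDir hD.1 o,
    S.existsUnique_isPole_expand (hD.existsUnique_isPole false) (ho false),
    S.existsUnique_isPole_expand (hD.existsUnique_isPole true) (ho true)⟩

theorem Distribution.IsAdmissibleOrigin.isPlaneStGraph_expand [Finite V] [Finite E] {o : Fin 4}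
    (ho : S.IsAdmissibleOrigin o) (hD : D.IsPlaneStGraph)
    (hout : ∀ k, D.IsPole k v → S.CornerOnOuterFace (quadPole o k)) :
    (expand S (quadDir o)).IsPlaneStGraph := by
  obtain ⟨hplane, hst, houter⟩ := hD
  refine ⟨S.isPlane_expand _ hplane, ho.isStGraph_expand hst, fun p hp => ?_⟩
  obtain ⟨k, hk⟩ := isSource_or_isSink_iff.1 hp
  rcases p with u | j
  · refine S.onOuterFace_inl _ (houter u (isSource_or_isSink_iff.2 ⟨k, ?_⟩))
    exact (S.isPole_expand_inl_iff _).1 hk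
  · obtain ⟨rfl, hj⟩ := S.isPole_expand_inr_iff.1 hk
    rw [S.onOuterFace_inr_iff_cornerOnOuterFace _ (vert_surjective hplane.1 v)]
    refine hout k ((ho k).resolve_right ?_)
    rintro ⟨x, hx, hxk⟩
    simpa [hxk] using hj x hx

variable (S)

theorem Distribution.isFaceBoundedBy_expand (o : Fin 4) :
    (expand S (quadDir o)).IsFaceBoundedBy (Sum.inr o) (Sum.inr (o + 2))
      [Sum.inr o, Sum.inr (o + 1)] [Sum.inr (o - 1), Sum.inr (o - 2)] := by
  have src_inr (i : Fin 4) : (expand S (quadDir o)).src (Sum.inr i) =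
      Sum.inr (if true = quadDir o i then i else i + 1) := rfl
  have tgt_inr (i : Fin 4) : (expand S (quadDir o)).tgt (Sum.inr i) =
      Sum.inr (if false = quadDir o i then i else i + 1) := rfl
  have faceNext_inr (i j : Fin 4) (k l : Bool)
      (h : k = (!quadDir o i) ∧ j = i - 1 ∧ l = !quadDir o (i - 1)) :
      (expand S (quadDir o)).faceNext (Sum.inr i, k) = (Sum.inr j, l) := by
    obtain ⟨rfl, rfl, rfl⟩ := h
    exact S.faceNext_innerSide _ i
  refine ⟨?_, ?_, ?_, ?_⟩
  · simp only [IsDirectedWalk, src_inr, tgt_inr, Sum.inr.injEq]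
    clear src_inr tgt_inr faceNext_inr
    revert o
    decide
  · simp only [IsDirectedWalk, src_inr, tgt_inr, Sum.inr.injEq]
    clear src_inr tgt_inr faceNext_inr
    revert o
    decide
  · simp
  · simp only [List.map_cons, List.map_nil, List.reverse_cons, List.reverse_nil, List.nil_append,
      List.cons_append, Cycle.chain_coe_cons, List.isChain_cons_cons, List.isChain_singleton,
      and_true]
    refine ⟨?_, ?_, ?_, ?_⟩ <;> apply faceNext_inr <;> clear src_inr tgt_inr faceNext_inr <;>
      revert o <;> decide

end Orientation

section Origin

variable {V E : Type*} {D : EmbeddedDigraph V E} {v : V} (S : D.Distribution v)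

theorem Distribution.isAdmissibleOrigin_of_mem {o : Fin 4} {x y : E × Bool} (hx : x ∈ S.block o)
    (hy : y ∈ S.block (o + 2)) (hx_in : x.2 = false) (hy_out : y.2 = true) :
    S.IsAdmissibleOrigin o
  | false => Or.inr ⟨x, hx, hx_in⟩
  | true => Or.inr ⟨y, hy, hy_out⟩

theorem Distribution.snd_eq_of_mem_opposite_blocks (h : ∀ o, ¬ S.IsAdmissibleOrigin o) {i : Fin 4}
    {x y : E × Bool} (hx : x ∈ S.block i) (hy : y ∈ S.block (i + 2)) : x.2 = y.2 := by
  have hx' : x ∈ S.block (i + 2 + 2) := by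
    rwa [add_assoc, show (2 + 2 : Fin 4) = 0 from rfl, add_zero]
  cases hxk : x.2 <;> cases hyk : y.2
  · rfl
  · exact absurd (S.isAdmissibleOrigin_of_mem hx hy hxk hyk) (h i)
  · exact absurd (S.isAdmissibleOrigin_of_mem hy hx' hyk hxk) (h (i + 2))
  · rfl

theorem Distribution.exists_isAdmissibleOrigin_of_forall_not_isPole [Finite V] [Finite E]
    (hP : D.IsPlane) (hD : D.IsStGraph) (hv : ∀ k, ¬ D.IsPole k v)
    (hS : ∀ i, S.block i ≠ []) : ∃ o, S.IsAdmissibleOrigin o := by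
  by_contra! hne
  choose first first_mem using fun i => List.exists_mem_of_ne_nil _ (hS i)
  have opposite (i : Fin 4) : (first i).2 = (first (i + 2)).2 :=
    S.snd_eq_of_mem_opposite_blocks hne (first_mem i) (first_mem (i + 2))
  have snd_eq {i : Fin 4} {x : E × Bool} (hx : x ∈ S.block i) : x.2 = (first i).2 :=
    (S.snd_eq_of_mem_opposite_blocks hne hx (first_mem (i + 2))).trans (opposite i).symm
  have exists_outIn {i : Fin 4} (hi : (first i).2 = true) (hi' : (first (i + 1)).2 = false) :
      ∃ x ∈ S.block i, x ∈ outIn D.rot := by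
    obtain ⟨x, hx, hrx⟩ := S.exists_rot_mem_block_add_one (hS i) (hS (i + 1))
    exact ⟨x, hx, (snd_eq hx).trans hi, (snd_eq hrx).trans hi'⟩
  have propagate (i : Fin 4) (hi' : (first (i + 1)).2 = false) : (first i).2 = false := by
    by_contra hi
    rw [Bool.not_eq_false] at hi
    obtain ⟨x, hx, hx_switch⟩ := exists_outIn hi hi'
    obtain ⟨y, hy, hy_switch⟩ := exists_outIn (i := i + 2) ((opposite i).symm.trans hi)
      (by rw [add_right_comm, ← opposite, hi'])
    obtain rfl := injOn_vert_outIn_rot hP hD hx_switch hy_switch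
      ((S.vert_of_mem_block hx).trans (S.vert_of_mem_block hy).symm)
    simpa using S.eq_of_mem_block_of_mem_block hx hy
  have first_eq (i j : Fin 4) : (first i).2 = (first j).2 := by
    have false_imp (i j : Fin 4) (hi : (first i).2 = false) : (first j).2 = false :=
      forall_of_add_one_imp (P := fun i => (first i).2 = false) propagate hi j
    exact Bool.not_inj (Bool.coe_false_iff_false.1 ⟨false_imp i j, false_imp j i⟩)
  refine hv (!(first 0).2) fun e he => ?_
  obtain ⟨i, hi⟩ := S.exists_mem_block he
  simpa [first_eq i 0] using snd_eq hi

theorem Distribution.isAdmissibleOrigin_of_isPole {o : Fin 4} {k : Bool} (hv : D.IsPole k v)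
    (h : S.block (quadPole o (!k)) ≠ []) : S.IsAdmissibleOrigin o := by
  intro l
  rcases Bool.eq_or_eq_not l k with rfl | rfl
  · exact Or.inl hv
  · obtain ⟨x, hx⟩ := List.exists_mem_of_ne_nil _ h
    exact Or.inr ⟨x, hx, IsPole.snd_eq_not (by rwa [S.vert_of_mem_block hx])⟩

theorem Distribution.exists_opposite_block_ne_nil (hv : ∃ x, D.vert x = v)
    (hout : D.OnOuterFace v) : ∃ i, S.block (i + 2) ≠ [] ∧
      ((∀ j, S.block j ≠ []) ∨ (∃ j, S.CornerOnOuterFace j ∧ S.block (j + 2) ≠ []) →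
        S.CornerOnOuterFace i) := by
  by_cases h : ∃ j, S.CornerOnOuterFace j ∧ S.block (j + 2) ≠ []
  · obtain ⟨i, hi, hi'⟩ := h
    exact ⟨i, hi', fun _ => hi⟩
  · obtain ⟨x, hx⟩ := hv
    obtain ⟨j, hj⟩ := S.exists_mem_block hx
    refine ⟨j - 2, by simpa using List.ne_nil_of_mem hj, fun hcond => ?_⟩
    obtain ⟨i, hi⟩ := S.exists_cornerOnOuterFace hout
    exact absurd (hcond.elim (fun hne => ⟨i, hi, hne _⟩) id) h

theorem Distribution.exists_isAdmissibleOrigin [Finite V] [Finite E] (hD : D.IsPlaneStGraph)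
    (hS : (∀ k, ¬ D.IsPole k v) → ∀ i, S.block i ≠ []) :
    ∃ o, S.IsAdmissibleOrigin o ∧
      ((∀ i, S.block i ≠ []) ∨ (∃ i, S.CornerOnOuterFace i ∧ S.block (i + 2) ≠ []) →
        ∀ k, D.IsPole k v → S.CornerOnOuterFace (quadPole o k)) := by
  obtain ⟨hplane, hst, houter⟩ := hD
  by_cases hv : ∃ k, D.IsPole k v
  · obtain ⟨i, hi, hcorner⟩ := S.exists_opposite_block_ne_nil (vert_surjective hplane.1 v)
      (houter v (isSource_or_isSink_iff.2 hv))
    obtain ⟨k, hk⟩ := hv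
    refine ⟨quadPole i k, S.isAdmissibleOrigin_of_isPole hk (by rwa [quadPole_quadPole_not]),
      fun hcond l hl => ?_⟩
    rcases Bool.eq_or_eq_not l k with rfl | rfl
    · rw [quadPole_quadPole]
      exact hcorner hcond
    · exact absurd hl (not_isPole_not hplane.1 hk)
  · push Not at hv
    obtain ⟨o, ho⟩ := S.exists_isAdmissibleOrigin_of_forall_not_isPole hplane hst hv (hS hv)
    exact ⟨o, ho, fun _ k hk => absurd hk (hv k)⟩

end Origin

end EmbeddedDigraph

/-- Expansion of a vertex `v` of a plane st-graph `D` into a quadrilateral face. The vertices of the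
new face are `Sum.inr 0, Sum.inr 1, Sum.inr 2, Sum.inr 3` in clockwise order. If `v` is neither the
source nor the sink, then each of them receives at least one of the edges formerly at `v`. -/
theorem expand_vertex_of_plane_st_digraph {V E : Type*} [Finite V] [Finite E]
    (D : EmbeddedDigraph V E) (hD : D.IsPlaneStGraph) (v : V) (S : D.Distribution v)
    (hS : ¬ D.IsSource v → ¬ D.IsSink v → ∀ i : Fin 4, S.block i ≠ []) :
    ∃ dir : Fin 4 → Bool,
      -- (I1) a single source and a single sink
      ((∃! s, (EmbeddedDigraph.expand S dir).IsSource s) ∧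
        (∃! t, (EmbeddedDigraph.expand S dir).IsSink t)) ∧
      -- (I2) the new face is bounded by two directed paths of length two from one of its vertices
      -- to the opposite one
      (∃ o : Fin 4, (EmbeddedDigraph.expand S dir).IsFaceBoundedBy (Sum.inr o) (Sum.inr (o + 2))
        [Sum.inr o, Sum.inr (o + 1)] [Sum.inr (o - 1), Sum.inr (o - 2)]) ∧
      -- the result is a plane embedding of an st-graph
      (EmbeddedDigraph.expand S dir).IsPlane ∧ (EmbeddedDigraph.expand S dir).IsStGraph ∧
      -- and a plane st-graph if all four vertices have received an edge (so in particular if `v` is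
      -- neither the source nor the sink), or if some vertex of the new face that
      -- lies on the outer face is opposite to one that has received an edge
      ((∀ i : Fin 4, S.block i ≠ []) ∨
          (∃ i : Fin 4, S.CornerOnOuterFace i ∧ S.block (i + 2) ≠ []) →
        (EmbeddedDigraph.expand S dir).IsPlaneStGraph) := by
  obtain ⟨o, ho, hout⟩ := S.exists_isAdmissibleOrigin hD (fun hv => hS (hv false) (hv true))
  have hst := ho.isStGraph_expand hD.2.1
  exact ⟨EmbeddedDigraph.quadDir o, hst.2, ⟨o, S.isFaceBoundedBy_expand o⟩,
    S.isPlane_expand _ hD.1, hst, fun h => ho.isPlaneStGraph_expand hD (hout h)⟩
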